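/- arXiv:1710.00285 — 5 statements merged into one kernel-verified Lean document; each statement's English description precedes it below -/
import Mathlib

section
/- Let n be a natural number and let S be a set of vectors in EuclideanSpace ℝ (Fin n) such that every v ∈ S satisfies ‖v‖ = 1, and for all distinct v, w ∈ S the inner product satisfies ⟪v, w⟫_ℝ < 1/2 (equivalently, the angle subtended by v and w at the origin exceeds π/3). Then S is finite and its cardinality is at most 3^n − 1. -/
/-!
The balls of radius `1/2` centred at the points of `S` and at the origin are pairwise disjoint:
two unit vectors with inner product less than `1/2` satisfy `‖v - w‖² = 2 - 2⟪v, w⟫ > 1`, and a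
unit vector is at distance `1` from the origin. All these balls lie in the ball of radius `3/2`
about the origin, whose volume is `3 ^ n` times that of each of them, so at most `3 ^ n` such
centres exist. One of them is the origin, which leaves at most `3 ^ n - 1` points for `S`.
-/
open scoped RealInnerProductSpace

open MeasureTheory Metric in
/-- Packing bound in the closed unit ball: pairwise disjoint balls of radius `1/2` about the points
of `s` all lie in the ball of radius `3/2` about the origin. -/
theorem card_le_three_pow_of_separated (n : ℕ) (s : Finset (EuclideanSpace ℝ (Fin n)))
    (hs : ∀ c ∈ s, ‖c‖ ≤ 1) (h : ∀ c ∈ s, ∀ d ∈ s, c ≠ d → 1 ≤ ‖c - d‖) :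
    s.card ≤ 3 ^ n := by
  let μ : Measure (EuclideanSpace ℝ (Fin n)) := volume
  have hdisj : (s : Set (EuclideanSpace ℝ (Fin n))).PairwiseDisjoint
      (fun c => ball c (1 / 2 : ℝ)) := by
    intro c hc d hd hcd
    apply ball_disjoint_ball
    rw [dist_eq_norm]
    linarith [h c hc d hd hcd]
  have hsub : (⋃ c ∈ s, ball c (1 / 2 : ℝ)) ⊆ ball 0 (3 * (1 / 2)) := by
    refine Set.iUnion₂_subset fun c hc => ball_subset_ball' ?_
    rw [dist_zero_right]
    linarith [hs c hc]
  have hvol : (s.card : ENNReal) * μ (ball 0 (1 / 2)) ≤ (3 ^ n : ENNReal) * μ (ball 0 (1 / 2)) :=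
    calc
      (s.card : ENNReal) * μ (ball 0 (1 / 2)) = μ (⋃ c ∈ s, ball c (1 / 2 : ℝ)) := by
        rw [measure_biUnion_finset hdisj fun c _ => measurableSet_ball,
          Finset.sum_congr rfl fun c _ => Measure.addHaar_ball_center μ c (1 / 2),
          Finset.sum_const, nsmul_eq_mul]
      _ ≤ μ (ball 0 (3 * (1 / 2))) := measure_mono hsub
      _ = (3 ^ n : ENNReal) * μ (ball 0 (1 / 2)) := by
        rw [Measure.addHaar_ball_mul_of_pos μ 0 (by norm_num : (0 : ℝ) < 3),
          finrank_euclideanSpace_fin, ENNReal.ofReal_pow (by norm_num), ENNReal.ofReal_ofNat]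
  have hcard : (s.card : ENNReal) ≤ 3 ^ n :=
    (ENNReal.mul_le_mul_iff_left (measure_ball_pos μ _ (by norm_num)).ne'
      measure_ball_lt_top.ne).1 hvol
  exact_mod_cast hcard

theorem kissing_number_bound (n : ℕ) (S : Set (EuclideanSpace ℝ (Fin n)))
    (hnorm : ∀ v ∈ S, ‖v‖ = 1)
    (hang : ∀ v ∈ S, ∀ w ∈ S, v ≠ w → ⟪v, w⟫ < 1 / 2) :
    S.Finite ∧ S.ncard ≤ 3 ^ n - 1 := by
  classical
  have key : ∀ F : Finset (EuclideanSpace ℝ (Fin n)), (F : Set _) ⊆ S → F.card + 1 ≤ 3 ^ n := by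
    intro F hF
    have hsep : ∀ c ∈ F, ∀ d ∈ F, c ≠ d → 1 ≤ ‖c - d‖ := by
      intro c hc d hd hcd
      have hsq := norm_sub_sq_real c d
      rw [hnorm c (hF hc), hnorm d (hF hd)] at hsq
      nlinarith [hang c (hF hc) d (hF hd) hcd, norm_nonneg (c - d)]
    have h0 : (0 : EuclideanSpace ℝ (Fin n)) ∉ F := fun h0 => by
      simpa using hnorm 0 (hF h0)
    rw [← Finset.card_insert_of_notMem h0]
    apply card_le_three_pow_of_separated
    · intro c hc
      rcases Finset.mem_insert.1 hc with rfl | hc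
      · simp
      · exact (hnorm c (hF hc)).le
    · intro c hc d hd hcd
      rcases Finset.mem_insert.1 hc with rfl | hc <;> rcases Finset.mem_insert.1 hd with rfl | hd
      · exact absurd rfl hcd
      · rw [zero_sub, norm_neg, hnorm d (hF hd)]
      · rw [sub_zero, hnorm c (hF hc)]
      · exact hsep c hc d hd hcd
  have hfin : S.Finite := by
    by_contra hinf
    obtain ⟨F, hF, hcard⟩ := Set.Infinite.exists_subset_card_eq hinf (3 ^ n)
    have := key F hF
    omega
  refine ⟨hfin, ?_⟩
  have := key hfin.toFinset (by simp)
  rw [Set.ncard_eq_toFinset_card S hfin]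
  omega
end

section
/- Let n ≥ 1 be a natural number and let (c_i)_{i ∈ I} be a family of points in EuclideanSpace ℝ (Fin n), indexed injectively by a set I, such that the closed balls closedBall(c_i, 1) of radius 1 are pairwise disjoint and each closed ball closedBall(c_i, 1) is contained in the annulus closedBall(0, 3) \ ball(0, 1). Then I is finite and its cardinality is at most 3^n − 1. -/
/-!
The unit balls `closedBall (c i) 1` together with `ball 0 1` are pairwise disjoint subsets of
`closedBall 0 3`. Writing `V` for the volume of the unit ball, any `k` indices therefore give
`(k + 1) * V ≤ 3 ^ n * V`, and `0 < V < ∞` yields `k + 1 ≤ 3 ^ n`. This bound on all finite sets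
of indices (`card_add_one_le`) gives both finiteness and the cardinality estimate.
-/

open MeasureTheory in
theorem card_add_one_le (n : ℕ) {ι : Type*} (c : ι → EuclideanSpace ℝ (Fin n))
    (hdisj : ∀ i j : ι, i ≠ j →
      Disjoint (Metric.closedBall (c i) 1) (Metric.closedBall (c j) 1))
    (hsub : ∀ i : ι, Metric.closedBall (c i) 1 ⊆
      Metric.closedBall (0 : EuclideanSpace ℝ (Fin n)) 3 \
        Metric.ball (0 : EuclideanSpace ℝ (Fin n)) 1)
    (s : Finset ι) : s.card + 1 ≤ 3 ^ n := by
  set V := volume (Metric.ball (0 : EuclideanSpace ℝ (Fin n)) 1) with hV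
  have hV0 : V ≠ 0 := (Metric.measure_ball_pos volume _ one_pos).ne'
  have hVtop : V ≠ ⊤ := measure_ball_lt_top.ne
  have hunion : volume (⋃ i ∈ s, Metric.closedBall (c i) 1) = s.card * V := by
    rw [measure_biUnion_finset (fun i _ j _ hij => hdisj i j hij)
      (fun i _ => Metric.isClosed_closedBall.measurableSet)]
    simp [Measure.addHaar_closedBall volume _ zero_le_one, ← hV]
  have hthree : volume (Metric.closedBall (0 : EuclideanSpace ℝ (Fin n)) 3) = 3 ^ n * V := by
    rw [Measure.addHaar_closedBall volume _ (by norm_num), finrank_euclideanSpace_fin,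
      ENNReal.ofReal_pow (by norm_num), ENNReal.ofReal_ofNat]
  have hd : Disjoint (⋃ i ∈ s, Metric.closedBall (c i) 1)
      (Metric.ball (0 : EuclideanSpace ℝ (Fin n)) 1) := by
    simp only [Set.disjoint_iUnion_left]
    exact fun i _ => Set.disjoint_left.2 fun x hx => (hsub i hx).2
  have hle : (s.card + 1 : ENNReal) * V ≤ 3 ^ n * V := by
    rw [add_mul, one_mul, ← hunion, ← hthree, hV,
      ← measure_union hd Metric.isOpen_ball.measurableSet]
    refine measure_mono (Set.union_subset (Set.iUnion₂_subset fun i _ x hx => (hsub i hx).1) ?_)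
    exact Metric.ball_subset_closedBall.trans (Metric.closedBall_subset_closedBall (by norm_num))
  exact_mod_cast (ENNReal.mul_le_mul_iff_left hV0 hVtop).1 hle

theorem packing_bound (n : ℕ) (hn : 1 ≤ n) {ι : Type*}
    (c : ι → EuclideanSpace ℝ (Fin n)) (hinj : Function.Injective c)
    (hdisj : ∀ i j : ι, i ≠ j →
      Disjoint (Metric.closedBall (c i) 1) (Metric.closedBall (c j) 1))
    (hsub : ∀ i : ι, Metric.closedBall (c i) 1 ⊆
      Metric.closedBall (0 : EuclideanSpace ℝ (Fin n)) 3 \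
        Metric.ball (0 : EuclideanSpace ℝ (Fin n)) 1) :
    Finite ι ∧ Nat.card ι ≤ 3 ^ n - 1 := by
  have key := card_add_one_le n c hdisj hsub
  have hfin : Finite ι := by
    by_contra h
    have : Infinite ι := not_finite_iff_infinite.1 h
    obtain ⟨s, hs⟩ := Infinite.exists_subset_card_eq ι (3 ^ n)
    have := key s
    omega
  refine ⟨hfin, ?_⟩
  have := Fintype.ofFinite ι
  rw [Nat.card_eq_fintype_card]
  exact Nat.le_sub_one_of_lt (key Finset.univ)
end

section
/- Let τ, τ_P, τ_Q, t be real numbers with 0 < τ, τ < τ_P, τ < τ_Q, 0 < t, and t·(τ_P + τ_Q − τ) ≤ τ_P·τ_Q. Then t − τ < (1/2)·√(τ_P − τ)·√(τ_Q − τ). -/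
/-!
Write `x = √(τP - τ)` and `y = √(τQ - τ)`. Subtracting `τ * (τP + τQ - τ)` from both sides turns
the trace estimate into `(t - τ) * (x² + y² + τ) ≤ x² * y²`. By AM-GM,
`x² + y² + τ > 2 * x * y`, so `t - τ ≥ x * y / 2` would make the left side exceed `x² * y²`.
-/

theorem cos_angle_lt_half (τ τP τQ t : ℝ) (hτ : 0 < τ) (hP : τ < τP) (hQ : τ < τQ)
    (ht : 0 < t) (h : t * (τP + τQ - τ) ≤ τP * τQ) :
    t - τ < (1 / 2) * Real.sqrt (τP - τ) * Real.sqrt (τQ - τ) := by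
  have hx : 0 < Real.sqrt (τP - τ) := Real.sqrt_pos.mpr (sub_pos.mpr hP)
  have hy : 0 < Real.sqrt (τQ - τ) := Real.sqrt_pos.mpr (sub_pos.mpr hQ)
  have hx2 : Real.sqrt (τP - τ) ^ 2 = τP - τ := Real.sq_sqrt (sub_pos.mpr hP).le
  have hy2 : Real.sqrt (τQ - τ) ^ 2 = τQ - τ := Real.sq_sqrt (sub_pos.mpr hQ).le
  generalize Real.sqrt (τP - τ) = x at *
  generalize Real.sqrt (τQ - τ) = y at *
  obtain rfl : τP = x ^ 2 + τ := by linarith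
  obtain rfl : τQ = y ^ 2 + τ := by linarith
  have hest : (t - τ) * (x ^ 2 + y ^ 2 + τ) ≤ x ^ 2 * y ^ 2 := by linarith
  have hamgm : 2 * (x * y) < x ^ 2 + y ^ 2 + τ := by linarith [sq_nonneg (x - y)]
  have hxy : 0 < x * y := mul_pos hx hy
  by_contra! hc
  have h1 : 1 / 2 * x * y * (x ^ 2 + y ^ 2 + τ) ≤ (t - τ) * (x ^ 2 + y ^ 2 + τ) :=
    mul_le_mul_of_nonneg_right hc (by positivity)
  have h2 : x * y * (2 * (x * y)) < x * y * (x ^ 2 + y ^ 2 + τ) :=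
    mul_lt_mul_of_pos_left hamgm hxy
  linarith
end

section
/- Let n be a natural number and let e, p, q be projections in Matrix n n ℂ with e ≤ p and e ≤ q. Then p * q = e if and only if Matrix.trace (p * q) = Matrix.trace e. -/
/-!
The trace of `p * q - e` controls its Hilbert–Schmidt norm: for `A = p * q - e` the projection
relations give `A * Aᴴ = p * q * p - e`, so by cyclicity
`trace (A * Aᴴ) = trace (p * q) - trace e`. Faithfulness of the trace
(`Matrix.trace_mul_conjTranspose_self_eq_zero_iff`) then turns equality of traces into `A = 0`.
-/

open Matrix

theorem commuting_square_iff_trace_eq (n : ℕ) (e p q : Matrix (Fin n) (Fin n) ℂ)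
    (he : eᴴ = e) (he2 : e * e = e)
    (hp : pᴴ = p) (hp2 : p * p = p)
    (hq : qᴴ = q) (hq2 : q * q = q)
    (hep : e * p = e) (hpe : p * e = e)
    (heq : e * q = e) (hqe : q * e = e) :
    p * q = e ↔ Matrix.trace (p * q) = Matrix.trace e := by
  refine ⟨fun h => by rw [h], fun h => ?_⟩
  have key : (p * q - e) * (p * q - e)ᴴ = p * q * p - e := by
    have h1 : p * q * (q * p) = p * q * p := by
      rw [← mul_assoc, mul_assoc p q q, hq2]
    have h2 : p * q * e = e := by rw [mul_assoc, hqe, hpe]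
    have h3 : e * (q * p) = e := by rw [← mul_assoc, heq, hep]
    rw [conjTranspose_sub, conjTranspose_mul, hp, hq, he, sub_mul, mul_sub, mul_sub,
      h1, h2, h3, he2, sub_self, sub_zero]
  have htr : Matrix.trace (p * q * p) = Matrix.trace (p * q) := by
    rw [Matrix.trace_mul_comm, ← mul_assoc, hp2]
  -- The positivity lemma needs the partial order on `ℂ`, which is a scoped instance.
  open scoped ComplexOrder in
  refine sub_eq_zero.mp (Matrix.trace_mul_conjTranspose_self_eq_zero_iff.mp ?_)
  rw [key, Matrix.trace_sub, htr, h, sub_self]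
end

section
/- Let n be a natural number and let e, p, q be projections in Matrix n n ℂ with e ≤ p and e ≤ q. Then (Matrix.trace ((p − e) * (q − e))).re = (Matrix.trace (p * q)).re − (Matrix.trace e).re, and the Frobenius norm satisfies ‖p − e‖² = (Matrix.trace p).re − (Matrix.trace e).re. Consequently, if p ≠ e and q ≠ e, the cosine of the angle between the unit vectors (p − e)/‖p − e‖ and (q − e)/‖q − e‖ with respect to the Frobenius inner product equals ((Matrix.trace (p * q)).re − (Matrix.trace e).re) / (√((Matrix.trace p).re − (Matrix.trace e).re) · √((Matrix.trace q).re − (Matrix.trace e).re)). -/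
/-!
Since `e ≤ p` and `e ≤ q`, expanding `(p - e) * (q - e)` collapses both cross terms to `e`, leaving
`p * q - e` (`sub_mul_sub_eq`). Taking traces gives the inner product of `p - e` and `q - e`, and the
case `q = p` gives the norm, because `p - e` is self-adjoint and `p * p = p`. The cosine formula
is the quotient of these.
-/

open Matrix

/-- The Frobenius norm of a complex matrix, `‖x‖ = √(tr(xᴴx))`. -/
noncomputable def frobNorm {n : ℕ} (x : Matrix (Fin n) (Fin n) ℂ) : ℝ :=
  Real.sqrt (Matrix.trace (xᴴ * x)).re

theorem sub_mul_sub_eq {n : ℕ} {e p q : Matrix (Fin n) (Fin n) ℂ}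
    (he2 : e * e = e) (hpe : p * e = e) (heq : e * q = e) :
    (p - e) * (q - e) = p * q - e := by
  rw [sub_mul, mul_sub, mul_sub, hpe, heq, he2, sub_self, sub_zero]

theorem trace_sub_mul_sub {n : ℕ} {e p q : Matrix (Fin n) (Fin n) ℂ}
    (he2 : e * e = e) (hpe : p * e = e) (heq : e * q = e) :
    Matrix.trace ((p - e) * (q - e)) = Matrix.trace (p * q) - Matrix.trace e := by
  rw [sub_mul_sub_eq he2 hpe heq, trace_sub]

theorem trace_conjTranspose_sub_mul_sub {n : ℕ} {e p : Matrix (Fin n) (Fin n) ℂ}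
    (he : eᴴ = e) (he2 : e * e = e) (hp : pᴴ = p) (hp2 : p * p = p)
    (hep : e * p = e) (hpe : p * e = e) :
    (Matrix.trace ((p - e)ᴴ * (p - e))).re = (Matrix.trace p).re - (Matrix.trace e).re := by
  rw [conjTranspose_sub, hp, he, trace_sub_mul_sub he2 hpe hep, hp2, Complex.sub_re]

theorem frobNorm_sub_eq_sqrt {n : ℕ} {e p : Matrix (Fin n) (Fin n) ℂ}
    (he : eᴴ = e) (he2 : e * e = e) (hp : pᴴ = p) (hp2 : p * p = p)
    (hep : e * p = e) (hpe : p * e = e) :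
    frobNorm (p - e) = Real.sqrt ((Matrix.trace p).re - (Matrix.trace e).re) := by
  rw [frobNorm, trace_conjTranspose_sub_mul_sub he he2 hp hp2 hep hpe]

/-- The difference of traces is `tr(xᴴx)` for `x = p - e`, hence nonnegative. -/
theorem trace_re_sub_nonneg {n : ℕ} {e p : Matrix (Fin n) (Fin n) ℂ}
    (he : eᴴ = e) (he2 : e * e = e) (hp : pᴴ = p) (hp2 : p * p = p)
    (hep : e * p = e) (hpe : p * e = e) :
    0 ≤ (Matrix.trace p).re - (Matrix.trace e).re := by
  rw [← trace_conjTranspose_sub_mul_sub he he2 hp hp2 hep hpe]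
  open scoped ComplexOrder in
  exact (Complex.le_def.1 (posSemidef_conjTranspose_mul_self (p - e)).trace_nonneg).1

theorem cos_angle_formula (n : ℕ) (e p q : Matrix (Fin n) (Fin n) ℂ)
    (he : eᴴ = e) (he2 : e * e = e)
    (hp : pᴴ = p) (hp2 : p * p = p)
    (hq : qᴴ = q) (hq2 : q * q = q)
    (hep : e * p = e) (hpe : p * e = e)
    (heq : e * q = e) (hqe : q * e = e) :
    (Matrix.trace ((p - e) * (q - e))).re
        = (Matrix.trace (p * q)).re - (Matrix.trace e).re ∧
    frobNorm (p - e) ^ 2 = (Matrix.trace p).re - (Matrix.trace e).re ∧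
    (p ≠ e → q ≠ e →
      (Matrix.trace (((frobNorm (q - e))⁻¹ • (q - e))ᴴ *
          ((frobNorm (p - e))⁻¹ • (p - e)))).re
        = ((Matrix.trace (p * q)).re - (Matrix.trace e).re) /
            (Real.sqrt ((Matrix.trace p).re - (Matrix.trace e).re) *
              Real.sqrt ((Matrix.trace q).re - (Matrix.trace e).re))) := by
  have hPQ := trace_sub_mul_sub he2 hpe heq
  have hQP := trace_sub_mul_sub he2 hqe hep
  have hfp := frobNorm_sub_eq_sqrt he he2 hp hp2 hep hpe
  have hfq := frobNorm_sub_eq_sqrt he he2 hq hq2 heq hqe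
  refine ⟨by rw [hPQ, Complex.sub_re], ?_, fun _ _ => ?_⟩
  · rw [hfp, Real.sq_sqrt (trace_re_sub_nonneg he he2 hp hp2 hep hpe)]
  · have hsub : (q - e)ᴴ = q - e := by rw [conjTranspose_sub, hq, he]
    rw [conjTranspose_smul, hsub, star_trivial, smul_mul_smul_comm, trace_smul,
      hQP, Complex.smul_re, Complex.sub_re, trace_mul_comm q p, hfp, hfq,
      smul_eq_mul, ← mul_inv, mul_comm (Real.sqrt _), div_eq_inv_mul]
end
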